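/- arXiv:0809.1141 — 3 statements merged into one kernel-verified Lean document; each statement's English description precedes it below -/
import Mathlib

section
/- Let $n \in \mathbb{N}$, $p \in [0,1]$, and let $X$ be a binomial random variable with parameters $n$ and $p$ (i.e., $X$ has the distribution $\mathrm{Bin}(n,p)$). Then for every real number $k$ with $k \geq np$ and $k > 0$, the upper tail satisfies $P[X \geq k] \leq (np/k)^k \exp(k - np)$. -/
/-- Chernoff-type upper-tail bound for the binomial distribution `Bin(n, p)`:
for real `k` with `k ≥ n p` and `k > 0`, `P[X ≥ k] ≤ (np/k)^k exp(k - np)`. -/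
theorem stmt_0 (n : ℕ) (p : ℝ) (hp0 : 0 ≤ p) (hp1 : p ≤ 1) (k : ℝ)
    (hknp : (n : ℝ) * p ≤ k) (hk0 : 0 < k) :
    (∑ j ∈ Finset.range (n + 1),
        if k ≤ (j : ℝ) then (n.choose j : ℝ) * p ^ j * (1 - p) ^ (n - j) else 0)
      ≤ ((n : ℝ) * p / k) ^ k * Real.exp (k - (n : ℝ) * p) := by
  rcases (mul_nonneg (Nat.cast_nonneg n) hp0 : 0 ≤ (n : ℝ) * p).eq_or_lt with h0 | hpos
  · have hr : 0 ≤ ((n : ℝ) * p / k) ^ k * Real.exp (k - (n : ℝ) * p) := by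
      rw [← h0]; positivity
    refine le_trans (le_of_eq (Finset.sum_eq_zero fun j hj => ?_)) hr
    split_ifs with hkj
    · have hj0 : 0 < j := by
        have : (0 : ℝ) < j := lt_of_lt_of_le hk0 hkj
        exact_mod_cast this
      rcases mul_eq_zero.mp h0.symm with hn | hp
      · have : n = 0 := by exact_mod_cast hn
        have := Finset.mem_range.mp hj
        omega
      · simp [hp, hj0.ne']
    · rfl
  · have hq : 0 ≤ 1 - p := by linarith
    have hn : (0 : ℝ) < n := by
      rcases (Nat.cast_nonneg n : (0 : ℝ) ≤ n).eq_or_lt with h | h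
      · rw [← h] at hpos; simp at hpos
      · exact h
    have hp : 0 < p := by
      by_contra h
      have : p = 0 := by linarith
      simp [this] at hpos
    have ht : 1 ≤ k / (n * p) := (one_le_div hpos).mpr hknp
    set t := k / (n * p) with htd
    have ht0 : 0 < t := by linarith
    have hs : (n : ℝ) * p / k = t⁻¹ := by rw [htd, inv_div]
    have hsum : (∑ j ∈ Finset.range (n + 1),
        if k ≤ (j : ℝ) then (n.choose j : ℝ) * p ^ j * (1 - p) ^ (n - j) else 0)
        ≤ t⁻¹ ^ k * (p * t + (1 - p)) ^ n := by
      rw [add_pow, Finset.mul_sum]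
      refine Finset.sum_le_sum fun j _ => ?_
      split_ifs with hkj
      · have h1 : 1 ≤ t⁻¹ ^ k * t ^ j := by
          rw [Real.inv_rpow ht0.le, ← Real.rpow_natCast t j, ← Real.rpow_neg ht0.le,
            ← Real.rpow_add ht0]
          exact Real.one_le_rpow ht (by linarith)
        have h2 : 0 ≤ (n.choose j : ℝ) * p ^ j * (1 - p) ^ (n - j) := by positivity
        calc _ ≤ (t⁻¹ ^ k * t ^ j) * ((n.choose j : ℝ) * p ^ j * (1 - p) ^ (n - j)) :=
              le_mul_of_one_le_left h2 h1
          _ = _ := by rw [mul_pow]; ring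
      · positivity
    rw [hs]
    refine hsum.trans (mul_le_mul_of_nonneg_left ?_ (by positivity))
    have h3 : p * t + (1 - p) ≤ Real.exp (p * t - p) := by
      have := Real.add_one_le_exp (p * t - p)
      linarith
    have h4 : k - n * p = n * (p * t - p) := by
      rw [htd]; field_simp
    rw [h4, Real.exp_nat_mul]
    exact pow_le_pow_left₀ (by positivity) h3 n
end

section
/- Let $n \in \mathbb{N}$, $p \in [0,1]$, and let $X$ be a binomial random variable with parameters $n$ and $p$ (i.e., $X$ has the distribution $\mathrm{Bin}(n,p)$). Then for every real number $k$ with $0 < k \leq np$, the lower tail satisfies $P[X \leq k] \leq (np/k)^k \exp(k - np)$. -/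
/-- Chernoff-type lower-tail bound for the binomial distribution `Bin(n, p)`:
for real `k` with `0 < k ≤ n p`, `P[X ≤ k] ≤ (np/k)^k exp(k - np)`. -/
theorem stmt_1 (n : ℕ) (p : ℝ) (hp0 : 0 ≤ p) (hp1 : p ≤ 1) (k : ℝ)
    (hk0 : 0 < k) (hknp : k ≤ (n : ℝ) * p) :
    (∑ j ∈ Finset.range (n + 1),
        if (j : ℝ) ≤ k then (n.choose j : ℝ) * p ^ j * (1 - p) ^ (n - j) else 0)
      ≤ ((n : ℝ) * p / k) ^ k * Real.exp (k - (n : ℝ) * p) := by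
  have hnp : 0 < (n : ℝ) * p := lt_of_lt_of_le hk0 hknp
  obtain ⟨a, ha⟩ : ∃ a, a = (n : ℝ) * p / k := ⟨_, rfl⟩
  rw [← ha]
  have ha1 : 1 ≤ a := by rw [ha, le_div_iff₀ hk0]; linarith
  have ha0 : 0 < a := by linarith
  have hka : (n : ℝ) * p * a⁻¹ = k := by
    rw [ha, inv_div, mul_div_assoc', div_eq_iff hnp.ne']
    ring
  have hq : 0 ≤ 1 - p := by linarith
  have step1 : (∑ j ∈ Finset.range (n + 1),
        if (j : ℝ) ≤ k then (n.choose j : ℝ) * p ^ j * (1 - p) ^ (n - j) else 0)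
      ≤ a ^ k * (p * a⁻¹ + (1 - p)) ^ n := by
    rw [add_pow, Finset.mul_sum]
    apply Finset.sum_le_sum
    intro j _
    have e : a ^ k * ((p * a⁻¹) ^ j * (1 - p) ^ (n - j) * (n.choose j : ℝ))
        = (a ^ k * (a⁻¹) ^ j) * ((n.choose j : ℝ) * p ^ j * (1 - p) ^ (n - j)) := by
      rw [mul_pow]; ring
    rw [e]
    have hB : 0 ≤ (n.choose j : ℝ) * p ^ j * (1 - p) ^ (n - j) := by positivity
    split_ifs with h
    · apply le_mul_of_one_le_left hB
      have : a ^ k * (a⁻¹) ^ j = a ^ (k - j) := by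
        rw [Real.rpow_sub ha0, Real.rpow_natCast, inv_pow, div_eq_mul_inv]
      rw [this]
      exact Real.one_le_rpow ha1 (by linarith)
    · positivity
  refine step1.trans ?_
  gcongr
  have h1 : p * a⁻¹ + (1 - p) ≤ Real.exp (p * a⁻¹ - p) := by
    have := Real.add_one_le_exp (p * a⁻¹ - p)
    linarith
  calc (p * a⁻¹ + (1 - p)) ^ n ≤ (Real.exp (p * a⁻¹ - p)) ^ n :=
        pow_le_pow_left₀ (by positivity) h1 n
    _ = Real.exp (k - (n : ℝ) * p) := by
        rw [← Real.exp_nat_mul]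
        congr 1
        rw [← hka]; ring
end

section
/- Let $0 < \alpha < 1$, set $\delta = 1 - \alpha$, and let $(\Omega, \mathcal{F}, P)$ be a probability space carrying, for each $n \geq 2$, a random variable $X_n$ (the degree of a fixed vertex $v$ in the random intersection graph $G(n, m_n, p_n)$ with $p_n = (m_n n^{\alpha})^{-1/2}$) whose distribution is binomial $\mathrm{Bin}(n-1, q_n)$, where $q_n = 1 - (1 - p_n^2)^{m_n}$ and $m_n \geq 1$. Let $c \in (0,1)$ and let $a = a(c) \in (0,1)$ be the root of $a \log a - a + 1 = c$ in $(0,1)$. Then $P[X_n \leq a\, n^{\delta} \text{ for infinitely many } n] = 0$; in particular, almost surely $\limsup_{n \to \infty} X_n / n^{\delta} \geq a$. -/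
open MeasureTheory Filter

lemma aux_bound {Ω : Type} [MeasurableSpace Ω] (P : Measure Ω) (Y : Ω → ℕ) (N : ℕ) (q : ℝ)
    (hq0 : 0 ≤ q) (hq1 : q ≤ 1)
    (hd : ∀ j : ℕ, P {ω | Y ω = j} =
        ENNReal.ofReal ((N.choose j : ℝ) * q ^ j * (1 - q) ^ (N - j)))
    (S : Set ℕ) (C t : ℝ) (hC : 0 ≤ C) (ht : 0 ≤ t) (hS : ∀ j ∈ S, 1 ≤ C * t ^ j) :
    P {ω | Y ω ∈ S} ≤ ENNReal.ofReal (C * Real.exp (N * q * (t - 1))) := by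
  have h1q : 0 ≤ 1 - q := by linarith
  have h0 : ∀ j, 0 ≤ ((N.choose j : ℝ) * q ^ j * (1 - q) ^ (N - j)) := fun j => by positivity
  have hsub : {ω | Y ω ∈ S} ⊆ ⋃ j, {ω | Y ω = j ∧ j ∈ S} := by
    intro ω hω
    simp only [Set.mem_iUnion, Set.mem_setOf_eq]
    exact ⟨Y ω, rfl, hω⟩
  have hterm : ∀ j, P {ω | Y ω = j ∧ j ∈ S} ≤
      ENNReal.ofReal ((N.choose j : ℝ) * q ^ j * (1 - q) ^ (N - j) * (C * t ^ j)) := by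
    intro j
    by_cases hj : j ∈ S
    · simp only [hj, and_true]
      rw [hd j]
      apply ENNReal.ofReal_le_ofReal
      exact le_mul_of_one_le_right (h0 j) (hS j hj)
    · simp [hj]
  calc P {ω | Y ω ∈ S} ≤ P (⋃ j, {ω | Y ω = j ∧ j ∈ S}) := measure_mono hsub
    _ ≤ ∑' j, P {ω | Y ω = j ∧ j ∈ S} := measure_iUnion_le _
    _ ≤ ∑' j, ENNReal.ofReal ((N.choose j : ℝ) * q ^ j * (1 - q) ^ (N - j) * (C * t ^ j)) :=
        ENNReal.tsum_le_tsum hterm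
    _ = ∑ j ∈ Finset.range (N + 1),
          ENNReal.ofReal ((N.choose j : ℝ) * q ^ j * (1 - q) ^ (N - j) * (C * t ^ j)) := by
        apply tsum_eq_sum
        intro j hj
        have : N < j := by simpa using hj
        simp [Nat.choose_eq_zero_of_lt this]
    _ = ENNReal.ofReal (∑ j ∈ Finset.range (N + 1),
          ((N.choose j : ℝ) * q ^ j * (1 - q) ^ (N - j) * (C * t ^ j))) := by
        rw [ENNReal.ofReal_sum_of_nonneg]
        intro j _
        have := h0 j
        positivity
    _ = ENNReal.ofReal (C * (q * t + (1 - q)) ^ N) := by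
        congr 1
        rw [add_pow, Finset.mul_sum]
        apply Finset.sum_congr rfl
        intro j _
        rw [mul_pow]
        ring
    _ ≤ _ := by
        apply ENNReal.ofReal_le_ofReal
        apply mul_le_mul_of_nonneg_left _ hC
        have : (N * q * (t - 1) : ℝ) = N * (q * (t - 1)) := by ring
        rw [this, Real.exp_nat_mul]
        apply pow_le_pow_left₀ (by positivity)
        have := Real.add_one_le_exp (q * (t - 1))
        linarith

lemma aux_summable (k δ : ℝ) (hk : 0 < k) (hδ : 0 < δ) :
    Summable (fun n : ℕ => Real.exp (-k * (n : ℝ) ^ δ)) := by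
  have h1 := (isLittleO_exp_neg_mul_rpow_atTop hk (-2 / δ)).isBigO
  have h2 : Tendsto (fun n : ℕ => (n : ℝ) ^ δ) atTop atTop :=
    (tendsto_rpow_atTop hδ).comp tendsto_natCast_atTop_atTop
  have h3 := h1.comp_tendsto h2
  refine summable_of_isBigO_nat (g := fun n : ℕ => (n : ℝ) ^ (-2 : ℝ)) ?_ ?_
  · exact Real.summable_nat_rpow.2 (by norm_num)
  · refine h3.congr (fun n => rfl) (fun n => ?_)
    simp only [Function.comp]
    rw [← Real.rpow_mul (by positivity)]
    congr 1
    field_simp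

lemma aux_bc {Ω : Type} [MeasurableSpace Ω] (P : Measure Ω) [IsProbabilityMeasure P]
    (s : ℕ → Set Ω) (k δ : ℝ) (hk : 0 < k) (hδ : 0 < δ)
    (h : ∀ᶠ n : ℕ in atTop, P (s n) ≤ ENNReal.ofReal (Real.exp (-k * (n : ℝ) ^ δ))) :
    P (limsup s atTop) = 0 := by
  apply measure_limsup_atTop_eq_zero
  have hs : Summable (fun n => P.real (s n)) := by
    refine Summable.of_norm_bounded_eventually_nat (aux_summable k δ hk hδ) ?_
    filter_upwards [h] with n hn
    rw [Real.norm_of_nonneg measureReal_nonneg]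
    exact ENNReal.toReal_le_of_le_ofReal (Real.exp_pos _).le hn
  have : ∀ n, P (s n) = ENNReal.ofReal (P.real (s n)) := fun n => by
    simp [Measure.real]
  simp_rw [this]
  exact hs.tsum_ofReal_ne_top

/-- bounds on `q` -/
lemma aux_q (α : ℝ) (hα0 : 0 < α) (n m : ℕ) (hn : 1 ≤ n) (hm : 1 ≤ m) (p q : ℝ)
    (hp : p = ((m : ℝ) * (n : ℝ) ^ α) ^ (-(1 / 2) : ℝ))
    (hq : q = 1 - (1 - p ^ 2) ^ m) :
    0 ≤ q ∧ q ≤ 1 ∧ q * (n : ℝ) ^ α ≤ 1 ∧ 1 ≤ q * ((n : ℝ) ^ α + 1) := by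
  have hn' : (1 : ℝ) ≤ n := by exact_mod_cast hn
  have hm' : (1 : ℝ) ≤ m := by exact_mod_cast hm
  have hA : 1 ≤ (n : ℝ) ^ α := Real.one_le_rpow hn' hα0.le
  set A := (n : ℝ) ^ α
  have hmA : 1 ≤ (m : ℝ) * A := one_le_mul_of_one_le_of_one_le hm' hA
  have hp2 : p ^ 2 = ((m : ℝ) * A)⁻¹ := by
    rw [hp, ← Real.rpow_natCast, ← Real.rpow_mul (by positivity), ← Real.rpow_neg_one]
    norm_num
  have hple : p ^ 2 ≤ 1 := by rw [hp2]; exact inv_le_one_of_one_le₀ hmA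
  have hp0 : 0 ≤ p ^ 2 := sq_nonneg p
  have hmp : (m : ℝ) * p ^ 2 = A⁻¹ := by rw [hp2]; field_simp
  have hpow0 : 0 ≤ (1 - p ^ 2) ^ m := pow_nonneg (by linarith) _
  have hpow1 : (1 - p ^ 2) ^ m ≤ 1 := pow_le_one₀ (by linarith) (by linarith)
  have hber : 1 - A⁻¹ ≤ (1 - p ^ 2) ^ m := by
    have := one_add_mul_le_pow (a := -p ^ 2) (by linarith) m
    have e : 1 + -p ^ 2 = 1 - p ^ 2 := by ring
    rw [e] at this
    linarith
  have hexp : (1 - p ^ 2) ^ m ≤ Real.exp (-A⁻¹) := by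
    have : -A⁻¹ = m * (-p ^ 2) := by rw [← hmp]; ring
    rw [this, Real.exp_nat_mul]
    apply pow_le_pow_left₀ (by linarith)
    have := Real.add_one_le_exp (-p ^ 2)
    linarith
  have hexp2 : Real.exp (-A⁻¹) ≤ A / (A + 1) := by
    rw [Real.exp_neg]
    have h := Real.add_one_le_exp A⁻¹
    have : A / (A + 1) = (A⁻¹ + 1)⁻¹ := by field_simp; ring
    rw [this]
    exact inv_anti₀ (by positivity) h
  refine ⟨by linarith, by linarith, ?_, ?_⟩
  · have : q ≤ A⁻¹ := by linarith
    calc q * A ≤ A⁻¹ * A := by gcongr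
      _ = 1 := by field_simp
  · have : 1 - A / (A + 1) ≤ q := by linarith
    calc (1 : ℝ) = (1 - A / (A + 1)) * (A + 1) := by field_simp; ring
      _ ≤ _ := by gcongr

/-- Let `0 < α < 1`, `δ = 1 - α`, and for each `n ≥ 2` let `X n` be the degree of a
fixed vertex of the random intersection graph `G(n, mₙ, pₙ)` with
`pₙ = (mₙ n^α)^{-1/2}`, i.e. a `Bin(n-1, qₙ)`-distributed random variable with
`qₙ = 1 - (1 - pₙ²)^{mₙ}`.  If `c ∈ (0,1)` and `a = a(c) ∈ (0,1)` is the root of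
`a log a - a + 1 = c`, then `P[Xₙ ≤ a n^δ i.o.] = 0`; in particular, almost surely
`limsupₙ Xₙ / n^δ ≥ a`. -/
theorem stmt_15 (α δ : ℝ) (hα0 : 0 < α) (hα1 : α < 1) (hδ : δ = 1 - α)
    (Ω : Type) [MeasurableSpace Ω] (P : Measure Ω) [IsProbabilityMeasure P]
    (m : ℕ → ℕ) (hm : ∀ n, 1 ≤ m n)
    (p q : ℕ → ℝ)
    (hp : ∀ n, p n = ((m n : ℝ) * (n : ℝ) ^ α) ^ (-(1 / 2) : ℝ))
    (hq : ∀ n, q n = 1 - (1 - p n ^ 2) ^ m n)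
    (X : ℕ → Ω → ℕ) (hX : ∀ n, Measurable (X n))
    (hdist : ∀ n, 2 ≤ n → ∀ j : ℕ,
      P {ω | X n ω = j} =
        ENNReal.ofReal (((n - 1).choose j : ℝ) * q n ^ j * (1 - q n) ^ (n - 1 - j)))
    (c a : ℝ) (hc0 : 0 < c) (hc1 : c < 1) (ha0 : 0 < a) (ha1 : a < 1)
    (hac : a * Real.log a - a + 1 = c) :
    P (limsup (fun n : ℕ => {ω | (X n ω : ℝ) ≤ a * (n : ℝ) ^ δ}) atTop) = 0 ∧
      ∀ᵐ ω ∂P, a ≤ limsup (fun n : ℕ => (X n ω : ℝ) / (n : ℝ) ^ δ) atTop := by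
  have hδ0 : 0 < δ := by linarith
  have hQ : ∀ n : ℕ, 2 ≤ n → _ := fun n hn =>
    aux_q α hα0 n (m n) (by omega) (hm n) (p n) (q n) (hp n) (hq n)
  have hAB : ∀ n : ℕ, 2 ≤ n → (n : ℝ) ^ α * (n : ℝ) ^ δ = n := by
    intro n hn
    have : (0 : ℝ) < n := by positivity
    rw [← Real.rpow_add this, hδ]
    simp
  have hcast : ∀ n : ℕ, 2 ≤ n → ((n - 1 : ℕ) : ℝ) = n - 1 := by
    intro n hn
    rw [Nat.cast_sub (by omega)]; simp
  -- upper bound for the mean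
  have hup : ∀ n : ℕ, 2 ≤ n → ((n - 1 : ℕ) : ℝ) * q n ≤ (n : ℝ) ^ δ := by
    intro n hn
    obtain ⟨h0, h1, h2, h3⟩ := hQ n hn
    have hB : 0 ≤ (n : ℝ) ^ δ := by positivity
    rw [hcast n hn]
    calc ((n : ℝ) - 1) * q n ≤ n * q n := by nlinarith
      _ = (q n * (n : ℝ) ^ α) * (n : ℝ) ^ δ := by
        nth_rewrite 1 [← hAB n hn]; ring
      _ ≤ 1 * (n : ℝ) ^ δ := by gcongr
      _ = _ := one_mul _
  -- lower bound for the mean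
  have hlow : ∀ᶠ n : ℕ in atTop, (1 - c / 2) * (n : ℝ) ^ δ ≤ ((n - 1 : ℕ) : ℝ) * q n := by
    have hA : Tendsto (fun n : ℕ => (n : ℝ) ^ α) atTop atTop :=
      (tendsto_rpow_atTop hα0).comp tendsto_natCast_atTop_atTop
    have hB : Tendsto (fun n : ℕ => (n : ℝ) ^ δ) atTop atTop :=
      (tendsto_rpow_atTop hδ0).comp tendsto_natCast_atTop_atTop
    filter_upwards [hA.eventually_ge_atTop (4 / c), hB.eventually_ge_atTop 1,
      tendsto_natCast_atTop_atTop.eventually_ge_atTop (4 / c), eventually_ge_atTop 2]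
      with n h4 hB1 h5 hn
    obtain ⟨h0, h1, h2, h3⟩ := hQ n hn
    rw [hcast n hn]
    have hab := hAB n hn
    have hn0 : (2 : ℝ) ≤ n := by exact_mod_cast hn
    set A := (n : ℝ) ^ α
    set B := (n : ℝ) ^ δ
    rw [div_le_iff₀ hc0] at h4 h5
    have hApos : 0 < A := by nlinarith
    have key : (1 - c / 2) * B * (A + 1) ≤ (n : ℝ) - 1 := by
      have hBn : B ≤ n * (c / 4) := by nlinarith
      have : (1 - c / 2) * B * (A + 1) = (1 - c / 2) * (A * B) + (1 - c / 2) * B := by ring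
      rw [this, hab]
      nlinarith
    have hB0 : 0 ≤ (1 - c / 2) * B := mul_nonneg (by linarith) (by linarith)
    calc (1 - c / 2) * B ≤ (1 - c / 2) * B * (q n * (A + 1)) := le_mul_of_one_le_right hB0 h3
      _ = ((1 - c / 2) * B * (A + 1)) * q n := by ring
      _ ≤ _ := by gcongr
  have hla : Real.log a < 0 := Real.log_neg ha0 ha1
  have part1 : P (limsup (fun n : ℕ => {ω | (X n ω : ℝ) ≤ a * (n : ℝ) ^ δ}) atTop) = 0 := by
    apply aux_bc P _ (c / 2) δ (by linarith) hδ0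
    filter_upwards [hlow, eventually_ge_atTop 2] with n hl hn
    obtain ⟨h0, h1, h2, h3⟩ := hQ n hn
    have hB : 0 ≤ (n : ℝ) ^ δ := by positivity
    have := aux_bound P (X n) (n - 1) (q n) h0 h1 (hdist n hn)
      {j : ℕ | (j : ℝ) ≤ a * (n : ℝ) ^ δ}
      (Real.exp (-(Real.log a * (a * (n : ℝ) ^ δ)))) a (Real.exp_pos _).le ha0.le (by
        intro j hj
        simp only [Set.mem_setOf_eq] at hj
        have e : a ^ j = Real.exp (j * Real.log a) := by
          rw [Real.exp_nat_mul, Real.exp_log ha0]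
        rw [e, ← Real.exp_add]
        apply Real.one_le_exp
        nlinarith)
    refine this.trans (ENNReal.ofReal_le_ofReal ?_)
    rw [← Real.exp_add]
    apply Real.exp_le_exp.2
    set B := (n : ℝ) ^ δ
    have h5 : (1 - c / 2) * B * (1 - a) ≤ ((n - 1 : ℕ) : ℝ) * q n * (1 - a) :=
      mul_le_mul_of_nonneg_right hl (by linarith)
    have h6 : Real.log a * (a * B) = (c + a - 1) * B := by rw [← hac]; ring
    have h7 : 0 ≤ c * a * B := by positivity
    rw [h6]
    nlinarith
  have part2 : P (limsup (fun n : ℕ => {ω | 3 * (n : ℝ) ^ δ ≤ (X n ω : ℝ)}) atTop) = 0 := by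
    apply aux_bc P _ 1 δ one_pos hδ0
    filter_upwards [eventually_ge_atTop 2] with n hn
    obtain ⟨h0, h1, h2, h3⟩ := hQ n hn
    have hB : 0 ≤ (n : ℝ) ^ δ := by positivity
    have := aux_bound P (X n) (n - 1) (q n) h0 h1 (hdist n hn)
      {j : ℕ | 3 * (n : ℝ) ^ δ ≤ (j : ℝ)}
      (Real.exp (-(3 * (n : ℝ) ^ δ))) (Real.exp 1) (Real.exp_pos _).le (Real.exp_pos _).le (by
        intro j hj
        simp only [Set.mem_setOf_eq] at hj
        rw [← Real.exp_nat_mul, ← Real.exp_add]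
        apply Real.one_le_exp
        linarith)
    refine this.trans (ENNReal.ofReal_le_ofReal ?_)
    rw [← Real.exp_add]
    apply Real.exp_le_exp.2
    have h5 := hup n hn
    have h6 : Real.exp 1 < 3 := Real.exp_one_lt_three
    have h7 : 1 < Real.exp 1 := Real.one_lt_exp_iff.2 one_pos
    nlinarith
  refine ⟨part1, ?_⟩
  have e1 := measure_eq_zero_iff_ae_notMem.1 part1
  have e2 := measure_eq_zero_iff_ae_notMem.1 part2
  filter_upwards [e1, e2] with ω h1 h2
  rw [mem_limsup_iff_frequently_mem, not_frequently] at h1 h2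
  have hbdd : IsBoundedUnder (· ≤ ·) atTop (fun n : ℕ => (X n ω : ℝ) / (n : ℝ) ^ δ) := by
    refine ⟨3, ?_⟩
    rw [eventually_map]
    filter_upwards [h2, eventually_ge_atTop 2] with n h hn
    have hB : 0 < (n : ℝ) ^ δ := by positivity
    rw [div_le_iff₀ hB]
    simp only [Set.mem_setOf_eq, not_le] at h
    exact h.le
  apply le_limsup_of_frequently_le _ hbdd
  apply Eventually.frequently
  filter_upwards [h1, eventually_ge_atTop 2] with n h hn
  have hB : 0 < (n : ℝ) ^ δ := by positivity
  rw [le_div_iff₀ hB]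
  simp only [Set.mem_setOf_eq, not_le] at h
  exact h.le
end
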